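/- arXiv:1406.5583 — 2 statements merged into one kernel-verified Lean document; each statement's English description precedes it below -/
import Mathlib

section
/- Let f(p) = Σ_{m=0}^∞ pᵐ aₘ be an entire power series with quaternionic coefficients and let I, J ∈ 𝕊 be two imaginary units. Then (1/π) ∫_{ℝ²} e^{−(x²+y²)} |f(x+yI)|² \,dx\,dy < ∞ if and only if (1/π) ∫_{ℝ²} e^{−(x²+y²)} |f(x+yJ)|² \,dx\,dy < ∞; that is, the definition of the slice hyperholomorphic quaternionic Fock space does not depend on the choice of imaginary unit. -/
open MeasureTheory Real Nat

noncomputable section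

local notation "ℍ" => Quaternion ℝ

/-- The sphere of quaternionic imaginary units. -/
def quatSphere : Set ℍ := {q | q.re = 0 ∧ ‖q‖ = 1}

/-- The point `x + y I` of the slice `ℂ_I`. -/
def sliceVal (I : ℍ) (z : ℝ × ℝ) : ℍ := ((z.1 : ℍ)) + ((z.2 : ℍ)) * I

/-- The squared Fock norm of `f` on the slice `ℂ_I`, with values in `[0,∞]`. -/
def fockNormSq (I : ℍ) (f : ℍ → ℍ) : ENNReal :=
  ENNReal.ofReal π⁻¹ *
    ∫⁻ z : ℝ × ℝ, ENNReal.ofReal (Real.exp (-(z.1 ^ 2 + z.2 ^ 2)) * ‖f (sliceVal I z)‖ ^ 2)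

theorem quatSphere_sq {I : ℍ} (hI : I ∈ quatSphere) : I * I = -1 := by
  have h1 : star I = -I := by
    rw [Quaternion.star_eq_neg]; exact hI.1
  have h2 := Quaternion.self_mul_star I
  rw [h1, Quaternion.normSq_eq_norm_mul_self, hI.2] at h2
  have h3 : -(I * I) = 1 := by rw [← mul_neg, h2]; simp
  rw [← h3, neg_neg]

theorem sliceVal_eq (I : ℍ) (z : ℝ × ℝ) :
    sliceVal I z = z.1 • (1 : ℍ) + z.2 • I := by
  unfold sliceVal
  rw [Quaternion.coe_mul_eq_smul]
  congr 1
  rw [← Quaternion.coe_mul_eq_smul, mul_one]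

theorem slice_pow (z : ℝ × ℝ) (m : ℕ) : ∃ u v : ℝ, ∀ K : ℍ, K * K = -1 →
    sliceVal K z ^ m = u • (1 : ℍ) + v • K := by
  induction m with
  | zero => exact ⟨1, 0, fun K _ => by simp⟩
  | succ m ih =>
    obtain ⟨u, v, h⟩ := ih
    refine ⟨u * z.1 - v * z.2, u * z.2 + v * z.1, fun K hK => ?_⟩
    rw [pow_succ, h K hK, sliceVal_eq]
    simp only [add_mul, mul_add, smul_mul_smul_comm, hK, one_mul, mul_one]
    module

theorem slice_repr (f : ℍ → ℍ) (a : ℕ → ℍ)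
    (hf : ∀ p : ℍ, HasSum (fun m : ℕ => p ^ m * a m) (f p))
    (I J : ℍ) (hI : I * I = -1) (hJ : J * J = -1) (z : ℝ × ℝ) :
    f (sliceVal J z) = (2⁻¹ : ℝ) • ((1 - J * I) * f (sliceVal I z)
      + (1 + J * I) * f (sliceVal I (z.1, -z.2))) := by
  have hn : sliceVal I (z.1, -z.2) = sliceVal (-I) z := by
    simp [sliceVal_eq]
  rw [hn]
  have h1 := (hf (sliceVal I z)).mul_left (1 - J * I)
  have h2 := (hf (sliceVal (-I) z)).mul_left (1 + J * I)
  have h3 := (h1.add h2).const_smul (2⁻¹ : ℝ)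
  refine (hf (sliceVal J z)).unique ?_
  suffices he : (fun m : ℕ => sliceVal J z ^ m * a m) = fun m : ℕ => (2⁻¹ : ℝ) •
      ((1 - J * I) * (sliceVal I z ^ m * a m) + (1 + J * I) * (sliceVal (-I) z ^ m * a m)) by
    rw [he]; exact h3
  funext m
  obtain ⟨u, v, h⟩ := slice_pow z m
  rw [h I hI, h J hJ, h (-I) (by simpa using hI), ← mul_assoc, ← mul_assoc, ← add_mul,
    ← smul_mul_assoc]
  congr 1
  have hJI : J * I * I = -J := by rw [mul_assoc, hI]; simp
  simp only [add_mul, sub_mul, mul_add, mul_smul_comm, mul_one, one_mul, mul_neg, hJI]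
  module

theorem slice_bound (f : ℍ → ℍ) (a : ℕ → ℍ)
    (hf : ∀ p : ℍ, HasSum (fun m : ℕ => p ^ m * a m) (f p))
    (I J : ℍ) (hI : I ∈ quatSphere) (hJ : J ∈ quatSphere) (z : ℝ × ℝ) :
    ‖f (sliceVal J z)‖ ^ 2 ≤ 2 * (‖f (sliceVal I z)‖ ^ 2
      + ‖f (sliceVal I (z.1, -z.2))‖ ^ 2) := by
  rw [slice_repr f a hf I J (quatSphere_sq hI) (quatSphere_sq hJ) z]
  set A := f (sliceVal I z)
  set B := f (sliceVal I (z.1, -z.2))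
  have hJI : ‖J * I‖ = 1 := by rw [norm_mul, hI.2, hJ.2, one_mul]
  have h1 : ‖1 - J * I‖ ≤ 2 := (norm_sub_le _ _).trans (by rw [hJI, norm_one]; norm_num)
  have h2 : ‖1 + J * I‖ ≤ 2 := (norm_add_le _ _).trans (by rw [hJI, norm_one]; norm_num)
  have h3 : ‖(2⁻¹ : ℝ) • ((1 - J * I) * A + (1 + J * I) * B)‖ ≤ ‖A‖ + ‖B‖ := by
    rw [norm_smul]
    have := norm_add_le ((1 - J * I) * A) ((1 + J * I) * B)
    rw [norm_mul, norm_mul] at this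
    have h4 := mul_le_mul_of_nonneg_right h1 (norm_nonneg A)
    have h5 := mul_le_mul_of_nonneg_right h2 (norm_nonneg B)
    rw [Real.norm_of_nonneg (by norm_num)]
    linarith
  have h6 := pow_le_pow_left₀ (norm_nonneg _) h3 2
  nlinarith [sq_nonneg (‖A‖ - ‖B‖)]

theorem slice_meas (f : ℍ → ℍ) (a : ℕ → ℍ)
    (hf : ∀ p : ℍ, HasSum (fun m : ℕ => p ^ m * a m) (f p)) (I : ℍ) :
    Measurable (fun z : ℝ × ℝ => ‖f (sliceVal I z)‖) := by
  have hc : Continuous (fun z : ℝ × ℝ => sliceVal I z) := by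
    simp only [sliceVal_eq]; fun_prop
  refine measurable_of_tendsto_metrizable
    (f := fun (n : ℕ) (z : ℝ × ℝ) => ‖∑ m ∈ Finset.range n, sliceVal I z ^ m * a m‖) ?_ ?_
  · intro n
    exact Continuous.measurable (by fun_prop)
  · rw [tendsto_pi_nhds]
    intro z
    exact (hf (sliceVal I z)).tendsto_sum_nat.norm

theorem fock_imp (f : ℍ → ℍ) (a : ℕ → ℍ)
    (hf : ∀ p : ℍ, HasSum (fun m : ℕ => p ^ m * a m) (f p))
    (I J : ℍ) (hI : I ∈ quatSphere) (hJ : J ∈ quatSphere)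
    (h : fockNormSq I f < ⊤) : fockNormSq J f < ⊤ := by
  have hpi : ENNReal.ofReal π⁻¹ ≠ 0 := by
    simp [Real.pi_pos]
  unfold fockNormSq at h ⊢
  refine ENNReal.mul_lt_top ENNReal.ofReal_lt_top ?_
  have h' := ENNReal.lt_top_of_mul_ne_top_right h.ne hpi
  set F : ℝ × ℝ → ENNReal := fun z =>
    ENNReal.ofReal (Real.exp (-(z.1 ^ 2 + z.2 ^ 2)) * ‖f (sliceVal I z)‖ ^ 2) with hF
  have hFm : Measurable F := by
    have := slice_meas f a hf I
    exact ENNReal.measurable_ofReal.comp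
      ((Continuous.measurable (by fun_prop)).mul (this.pow_const 2))
  have hT : MeasurePreserving (Prod.map id Neg.neg : ℝ × ℝ → ℝ × ℝ) :=
    (MeasurePreserving.id volume).prod (Measure.measurePreserving_neg volume)
  have hle : ∀ z : ℝ × ℝ,
      ENNReal.ofReal (Real.exp (-(z.1 ^ 2 + z.2 ^ 2)) * ‖f (sliceVal J z)‖ ^ 2)
        ≤ 2 * (F z + F (Prod.map id Neg.neg z)) := by
    intro z
    have hb := mul_le_mul_of_nonneg_left (slice_bound f a hf I J hI hJ z)
      (Real.exp_pos (-(z.1 ^ 2 + z.2 ^ 2))).le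
    rw [hF]
    simp only [Prod.map_fst, Prod.map_snd, id, neg_sq]
    rw [← ENNReal.ofReal_add (by positivity) (by positivity), ← ENNReal.ofReal_ofNat 2,
      ← ENNReal.ofReal_mul (by norm_num)]
    refine ENNReal.ofReal_le_ofReal (hb.trans (le_of_eq ?_))
    simp only [Prod.map, id]
    ring
  refine (lintegral_mono hle).trans_lt ?_
  rw [lintegral_const_mul' _ _ (by simp), lintegral_add_left hFm,
    hT.lintegral_comp hFm]
  exact ENNReal.mul_lt_top (by simp) (ENNReal.add_lt_top.2 ⟨h', h'⟩)

theorem fockNormSq_finite_independent_of_slice (f : ℍ → ℍ) (a : ℕ → ℍ)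
    (hf : ∀ p : ℍ, HasSum (fun m : ℕ => p ^ m * a m) (f p))
    (I J : ℍ) (hI : I ∈ quatSphere) (hJ : J ∈ quatSphere) :
    fockNormSq I f < ⊤ ↔ fockNormSq J f < ⊤ := by
  exact ⟨fock_imp f a hf I J hI hJ, fock_imp f a hf J I hJ hI⟩
end
end

section
/- Let y₀ ∈ ℝ, R > 0, let B = B(y₀, R) be the open ball in ℍ centered at y₀ with radius R, and let f : B → ℍ be left slice regular on B. Then for every q ∈ B, f(q) = Σ_{m=0}^∞ (q − y₀)ᵐ cₘ, where cₘ = (1/m!) times the m-th derivative at y₀ of the restriction of f to the real axis, and the series converges on B. -/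
open MeasureTheory Real Nat

noncomputable section

local notation "ℍ" => Quaternion ℝ

/-- `f` is left slice regular on `U`: on each slice it is real differentiable and satisfies the
Cauchy–Riemann equation `(∂/∂x + I ∂/∂y) f_I = 0`. -/
def SliceRegularOn (f : ℍ → ℍ) (U : Set ℍ) : Prop :=
  ∀ I ∈ quatSphere, ∀ z : ℝ × ℝ, sliceVal I z ∈ U →
    DifferentiableAt ℝ (fun w : ℝ × ℝ => f (sliceVal I w)) z ∧
      fderiv ℝ (fun w : ℝ × ℝ => f (sliceVal I w)) z (1, 0) +
        I * fderiv ℝ (fun w : ℝ × ℝ => f (sliceVal I w)) z (0, 1) = 0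


theorem taylor_aux {E : Type*} [NormedAddCommGroup E] [i1 : NormedSpace ℝ E] [i2 : NormedSpace ℂ E]
    [i3 : IsScalarTower ℝ ℂ E] [CompleteSpace E] (g : ℂ → E) (c R : ℝ)
    (hg : ∀ z ∈ Metric.ball (c : ℂ) R, DifferentiableAt ℝ g z ∧
      fderiv ℝ g z 1 + Complex.I • fderiv ℝ g z Complex.I = 0) (z : ℂ)
    (hz : z ∈ Metric.ball (c : ℂ) R) :
    HasSum (fun n : ℕ => (z - c) ^ n • ((n ! : ℝ)⁻¹ • iteratedDeriv n (fun t : ℝ => g t) c))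
      (g z) := by
  have hd : DifferentiableOn ℂ g (Metric.ball (c : ℂ) R) := by
    intro w hw
    obtain ⟨h1, h2⟩ := hg w hw
    have h3 : fderiv ℝ g w Complex.I = Complex.I • fderiv ℝ g w 1 := by
      have : Complex.I • (fderiv ℝ g w 1 + Complex.I • fderiv ℝ g w Complex.I) = 0 := by
        rw [h2, smul_zero]
      rw [smul_add, smul_smul, Complex.I_mul_I, neg_one_smul, add_neg_eq_zero] at this
      exact this.symm
    refine (DifferentiableAt.differentiableWithinAt (HasFDerivAt.differentiableAt
      (f' := (ContinuousLinearMap.toSpanSingleton ℂ (fderiv ℝ g w 1))) ?_))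
    refine hasFDerivAt_of_restrictScalars ℝ h1.hasFDerivAt ?_
    ext u
    have hu : u = u.re • (1 : ℂ) + u.im • Complex.I := by
      simp [Complex.re_add_im]
    rw [ContinuousLinearMap.coe_restrictScalars', ContinuousLinearMap.toSpanSingleton_apply]
    conv_rhs => rw [hu, map_add, map_smul, map_smul, h3]
    conv_lhs => rw [hu, add_smul, smul_assoc, smul_assoc, one_smul]
  have key : ∀ n : ℕ, ∀ t : ℝ, (t : ℂ) ∈ Metric.ball (c : ℂ) R →
      iteratedDeriv n (fun t : ℝ => g t) t = iteratedDeriv n g t := by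
    intro n
    induction n with
    | zero => intro t _; simp
    | succ n ih =>
      intro t ht
      rw [iteratedDeriv_succ, iteratedDeriv_succ]
      have he : iteratedDeriv n (fun t : ℝ => g t) =ᶠ[nhds t] fun t : ℝ => iteratedDeriv n g t := by
        have : ∀ᶠ s : ℝ in nhds t, (s : ℂ) ∈ Metric.ball (c : ℂ) R :=
          Complex.continuous_ofReal.continuousAt.eventually (Metric.isOpen_ball.mem_nhds ht)
        filter_upwards [this] with s hs using ih s hs
      rw [he.deriv_eq]
      have han : AnalyticAt ℂ g t := hd.analyticAt (Metric.isOpen_ball.mem_nhds ht)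
      have hda : DifferentiableAt ℂ (iteratedDeriv n g) (t : ℂ) := by
        rw [iteratedDeriv_eq_iterate]
        exact (han.iterated_deriv n).differentiableAt
      have := HasDerivAt.scomp (𝕜 := ℝ) t hda.hasDerivAt
        (Complex.ofRealCLM.hasDerivAt (x := t))
      simpa [Function.comp_def] using this.deriv
  have := Complex.hasSum_taylorSeries_on_ball hd hz
  convert this using 2 with n
  rw [key n c (Metric.mem_ball_self (Metric.pos_of_mem_ball hz)), ← algebraMap_smul ℂ ((n ! : ℝ)⁻¹),
    smul_comm]
  simp

theorem quat_aux (I : ℍ) (hI : I ∈ quatSphere) : I * I = -1 := by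
  obtain ⟨h1, h2⟩ := hI
  have h3 : star I = -I := by
    rw [Quaternion.star_eq_neg]; exact h1
  have h4 := Quaternion.self_mul_star I
  rw [h3, Quaternion.normSq_eq_norm_mul_self, h2] at h4
  have : -(I * I) = 1 := by simpa using h4
  rw [← this, neg_neg]

theorem slice_aux (I : ℍ) (hI : I ∈ quatSphere) (z : ℂ) :
    sliceVal I (Complex.equivRealProdCLM z) = Complex.liftAux I (quat_aux I hI) z := by
  rw [Complex.liftAux_apply]
  simp only [sliceVal, Complex.equivRealProdCLM_apply]
  rw [Quaternion.coe_mul_eq_smul]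
  rfl

theorem norm_aux (I : ℍ) (hI : I ∈ quatSphere) (z : ℂ) :
    ‖Complex.liftAux I (quat_aux I hI) z‖ = ‖z‖ := by
  obtain ⟨h1, h2⟩ := id hI
  have h3 : Quaternion.normSq I = 1 := by
    rw [Quaternion.normSq_eq_norm_mul_self, h2, one_mul]
  rw [Quaternion.normSq_def'] at h3
  have : ‖Complex.liftAux I (quat_aux I hI) z‖ ^ 2 = ‖z‖ ^ 2 := by
    rw [sq, ← Quaternion.normSq_eq_norm_mul_self, ← Complex.normSq_eq_norm_sq,
      Complex.liftAux_apply, Quaternion.normSq_def', Complex.normSq_apply]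
    simp [h1, Quaternion.algebraMap_def] at h3 ⊢
    linear_combination z.im ^ 2 * h3
  exact (sq_eq_sq₀ (norm_nonneg _) (norm_nonneg _)).1 this

theorem exists_aux (q : ℍ) : ∃ I, ∃ hI : I ∈ quatSphere, ∃ z : ℂ,
    q = Complex.liftAux I (quat_aux I hI) z := by
  by_cases h : q.im = 0
  · obtain ⟨J, hJ⟩ : ∃ J : ℍ, J = ⟨0, 1, 0, 0⟩ := ⟨_, rfl⟩
    refine ⟨J, ⟨by rw [hJ], ?_⟩, q.re, ?_⟩
    · have : ‖J‖ ^ 2 = 1 ^ 2 := by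
        rw [sq, ← Quaternion.normSq_eq_norm_mul_self, Quaternion.normSq_def']
        simp [hJ]
      exact (sq_eq_sq₀ (norm_nonneg _) zero_le_one).1 this
    · rw [Complex.liftAux_apply]
      conv_lhs => rw [← Quaternion.re_add_im q, h]
      simp
  · have h' : ‖q.im‖ ≠ 0 := norm_ne_zero_iff.2 h
    refine ⟨‖q.im‖⁻¹ • q.im, ⟨by simp, ?_⟩, ⟨q.re, ‖q.im‖⟩, ?_⟩
    · rw [norm_smul, norm_inv, norm_norm, inv_mul_cancel₀ h']
    · rw [Complex.liftAux_apply]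
      simp only [smul_smul, mul_inv_cancel₀ h', one_smul]
      exact (Quaternion.re_add_im q).symm

theorem taylor_expansion_at_real_center (y₀ R : ℝ) (hR : 0 < R) (f : ℍ → ℍ)
    (hf : SliceRegularOn f (Metric.ball ((y₀ : ℍ)) R)) :
    ∀ q ∈ Metric.ball ((y₀ : ℍ)) R,
      HasSum
        (fun m : ℕ =>
          (q - (y₀ : ℍ)) ^ m *
            (((m ! : ℝ)⁻¹) • iteratedDeriv m (fun t : ℝ => f ((t : ℍ))) y₀))
        (f q) := by
  intro q hq
  obtain ⟨I, hI, z, rfl⟩ := exists_aux q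
  let Φ : ℂ →ₐ[ℝ] ℍ := Complex.liftAux I (quat_aux I hI)
  have hΦn : ∀ z, ‖Φ z‖ = ‖z‖ := norm_aux I hI
  have hΦI : Φ Complex.I = I := Complex.liftAux_apply_I _ _
  have hΦr : ∀ t : ℝ, Φ t = (t : ℍ) := fun t => by
    simpa using Φ.commutes t
  have hball : ∀ w : ℂ, Φ w ∈ Metric.ball ((y₀ : ℍ)) R ↔ w ∈ Metric.ball (y₀ : ℂ) R := by
    intro w
    rw [mem_ball_iff_norm, mem_ball_iff_norm, ← hΦr, ← map_sub, hΦn]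
  have hcomp : (fun w : ℂ => f (Φ w)) =
      (fun w : ℝ × ℝ => f (sliceVal I w)) ∘ Complex.equivRealProdCLM := by
    funext w
    exact congrArg f (slice_aux I hI w).symm
  let m : Module ℂ ℍ := Module.compHom ℍ Φ.toRingHom
  have hle : ∀ (a : ℂ) (b : ℍ), ‖Φ a * b‖ ≤ ‖a‖ * ‖b‖ := fun a b => by
    rw [norm_mul, hΦn]
  let i2 : NormedSpace ℂ ℍ := { m with norm_smul_le := hle }
  have i3 : IsScalarTower ℝ ℂ ℍ := ⟨fun a b c => by
    change Φ (a • b) * c = a • (Φ b * c)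
    rw [map_smul, smul_mul_assoc]⟩
  have main := @taylor_aux ℍ _ _ i2 i3 _ (fun w => f (Φ w)) y₀ R (by
    intro w hw
    have hw' : sliceVal I (Complex.equivRealProdCLM w) ∈ Metric.ball ((y₀ : ℍ)) R := by
      rw [slice_aux I hI]
      exact (hball w).2 hw
    obtain ⟨h1, h2⟩ := hf I hI _ hw'
    have h3 := h1.hasFDerivAt.comp w Complex.equivRealProdCLM.hasFDerivAt
    rw [← hcomp] at h3
    refine ⟨h3.differentiableAt, ?_⟩
    rw [h3.fderiv]
    change _ + Φ Complex.I * _ = _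
    rw [hΦI]
    simpa using h2) z ((hball z).1 hq)
  simp only [hΦr] at main
  have he : (fun m : ℕ => (Φ z - (y₀ : ℍ)) ^ m *
      (((m ! : ℝ)⁻¹) • iteratedDeriv m (fun t : ℝ => f ((t : ℍ))) y₀)) = fun n : ℕ =>
      Φ ((z - y₀) ^ n) * (((n ! : ℝ)⁻¹) • iteratedDeriv n (fun t : ℝ => f ((t : ℍ))) y₀) := by
    funext n
    rw [map_pow, map_sub, hΦr]
  change HasSum (fun m : ℕ => (Φ z - (y₀ : ℍ)) ^ m *
      (((m ! : ℝ)⁻¹) • iteratedDeriv m (fun t : ℝ => f ((t : ℍ))) y₀)) _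
  rw [he]
  exact main
end
end
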